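/- arXiv:1902.07937 — 4 statements merged into one kernel-verified Lean document; each statement's English description precedes it below -/
import Mathlib

section
/- Every social Schelling game whose topology is a star graph admits at least one equilibrium assignment; in fact, every assignment in which the center of the star is occupied by some agent is an equilibrium. -/
/-- A (social) Schelling game: agents `A`, of which `strategic` are the strategic
ones (the rest being stubborn), a social network `net` on the agents (the friends
of an agent are her neighbors in `net`, all other agents are her enemies), a
topology `top` on the set of locations `V`, and the preferred locations `loc`
of the (stubborn) agents. -/
structure SchellingGame (A V : Type) where
  strategic : Finset A
  net : SimpleGraph A
  top : SimpleGraph V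
  loc : A → V

namespace SchellingGame

variable {A V : Type} [Fintype A] [DecidableEq A] [Fintype V] [DecidableEq V]

/-- There are `n ≥ 2` agents, strictly more locations than agents, and the
stubborn agents have pairwise distinct preferred locations. -/
def WellFormed (g : SchellingGame A V) : Prop :=
  2 ≤ Fintype.card A ∧ Fintype.card A < Fintype.card V ∧
    Set.InjOn g.loc ↑(g.strategicᶜ)

/-- An assignment is an injective placement of the agents on the nodes of the
topology which places every stubborn agent at her preferred location. -/
def IsAssignment (g : SchellingGame A V) (v : A → V) : Prop :=
  Function.Injective v ∧ ∀ i ∉ g.strategic, v i = g.loc i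

/-- The number of friends of `i` occupying nodes adjacent to `v i`. -/
noncomputable def fcount (g : SchellingGame A V) (v : A → V) (i : A) : ℕ :=
  Nat.card {j : A // g.net.Adj i j ∧ g.top.Adj (v i) (v j)}

/-- The number of enemies of `i` occupying nodes adjacent to `v i`. -/
noncomputable def ecount (g : SchellingGame A V) (v : A → V) (i : A) : ℕ :=
  Nat.card {j : A // j ≠ i ∧ ¬ g.net.Adj i j ∧ g.top.Adj (v i) (v j)}

/-- The utility of agent `i` under assignment `v`: `0` if `i` has no adjacent
friends, and otherwise the fraction of friends among her occupied neighbors. -/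
noncomputable def util (g : SchellingGame A V) (v : A → V) (i : A) : ℚ :=
  if g.fcount v i = 0 then 0
  else (g.fcount v i : ℚ) / ((g.fcount v i : ℚ) + (g.ecount v i : ℚ))

/-- An assignment is an equilibrium if no strategic agent can strictly increase
her utility by relocating to an unoccupied node. -/
def IsEquilibrium (g : SchellingGame A V) (v : A → V) : Prop :=
  g.IsAssignment v ∧ ∀ i ∈ g.strategic, ∀ z : V, (∀ j : A, v j ≠ z) →
    g.util (Function.update v i z) i ≤ g.util v i

/-- The social welfare: the total utility of the strategic agents. -/
noncomputable def SW (g : SchellingGame A V) (v : A → V) : ℚ :=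
  ∑ i ∈ g.strategic, g.util v i

/-- `g` is a `k`-typed Schelling game with type map `typ`: two distinct agents are
friends iff they have the same type, and every type is nonempty. -/
def IsTypedGame (g : SchellingGame A V) (k : ℕ) (typ : A → Fin k) : Prop :=
  (∀ i j : A, g.net.Adj i j ↔ (i ≠ j ∧ typ i = typ j)) ∧ ∀ c : Fin k, ∃ i : A, typ i = c

end SchellingGame

/-- A star graph: one center node adjacent to all other nodes, and no other edges. -/
def IsStar {V : Type} (G : SimpleGraph V) : Prop :=
  ∃ c : V, ∀ a b : V, G.Adj a b ↔ (a ≠ b ∧ (a = c ∨ b = c))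

/-!
In a star the neighbourhood of every leaf is the center alone. If the center is occupied, an agent
at a leaf can only move to another leaf, which has the same neighbourhood, so she gains nothing; the
agent at the center can only move to a leaf whose sole neighbour she has just vacated, so her
utility drops to zero.

For existence, start from any assignment. If the center is empty, move some strategic agent there;
if there is no strategic agent, every assignment is an equilibrium.
-/

open Function SimpleGraph

theorem exists_injective_eqOn_of_card_le {α β : Type*} [Fintype α] [Fintype β]
    (h : Fintype.card α ≤ Fintype.card β) {s : Set α} {f : α → β} (hf : s.InjOn f) :
    ∃ e : α → β, Injective e ∧ s.EqOn e f := by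
  classical
  obtain ⟨t, hst, -, ht⟩ := Finset.exists_subsuperset_card_eq (n := Fintype.card α)
    (Finset.subset_univ (s.toFinset.image f)) (Finset.card_image_le.trans (Finset.card_le_univ _))
    (by simpa only [Finset.card_univ] using h)
  obtain ⟨e, he⟩ := Finset.exists_equiv_extend_of_card_eq ht.symm hst
    (by rwa [Set.coe_toFinset])
  exact ⟨fun i ↦ e i, Subtype.val_injective.comp e.injective,
    fun i hi ↦ he i (Set.mem_toFinset.2 hi)⟩

theorem injective_update_of_notMem_range {α β : Type*} [DecidableEq α] {f : α → β}
    (hf : Injective f) {a : α} {b : β} (hb : b ∉ Set.range f) : Injective (update f a b) := by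
  intro x y hxy
  by_cases hx : x = a <;> by_cases hy : y = a
  · rw [hx, hy]
  · rw [hx, update_self, update_of_ne hy] at hxy
    exact absurd ⟨y, hxy.symm⟩ hb
  · rw [hy, update_self, update_of_ne hx] at hxy
    exact absurd ⟨x, hxy⟩ hb
  · rw [update_of_ne hx, update_of_ne hy] at hxy
    exact hf hxy

theorem neighborSet_starGraph_of_ne {V : Type*} {a c : V} (ha : a ≠ c) :
    (starGraph c).neighborSet a = {c} := by
  ext b
  simp only [mem_neighborSet, starGraph_adj, ha, false_or, Set.mem_singleton_iff]
  exact ⟨And.right, fun hb ↦ ⟨hb ▸ ha, hb⟩⟩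

namespace SchellingGame

variable {A V : Type} {g : SchellingGame A V} {v w : A → V} {i : A} {c z : V}

theorem util_nonneg (g : SchellingGame A V) (v : A → V) (i : A) : 0 ≤ g.util v i := by
  unfold util
  split_ifs
  · exact le_rfl
  · positivity

theorem util_eq_zero_of_forall_not_adj
    (h : ∀ j, g.net.Adj i j → ¬ g.top.Adj (v i) (v j)) : g.util v i = 0 := by
  have : IsEmpty {j // g.net.Adj i j ∧ g.top.Adj (v i) (v j)} := ⟨fun j ↦ h j j.2.1 j.2.2⟩
  exact if_pos Nat.card_of_isEmpty

theorem util_congr (h : ∀ j, g.top.Adj (v i) (v j) ↔ g.top.Adj (w i) (w j)) :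
    g.util v i = g.util w i := by
  have hf : g.fcount v i = g.fcount w i := by simp only [fcount, h]
  have he : g.ecount v i = g.ecount w i := by simp only [ecount, h]
  rw [util, util, hf, he]

section Update

variable [DecidableEq A]

theorem util_update_of_neighborSet_eq (h : g.top.neighborSet z = g.top.neighborSet (v i)) :
    g.util (update v i z) i = g.util v i := by
  refine util_congr fun j ↦ ?_
  rw [update_self]
  obtain rfl | hj := eq_or_ne j i
  · simp only [update_self, SimpleGraph.irrefl]
  · rw [update_of_ne hj, ← mem_neighborSet, h, mem_neighborSet]

theorem util_update_eq_zero_of_neighborSet_eq_singleton (hv : Injective v)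
    (h : g.top.neighborSet z = {v i}) : g.util (update v i z) i = 0 := by
  refine util_eq_zero_of_forall_not_adj fun j hij ↦ ?_
  rw [update_self, update_of_ne hij.ne', ← mem_neighborSet, h, Set.mem_singleton_iff]
  exact hv.ne hij.ne'

theorem IsAssignment.update (hv : g.IsAssignment v) (hi : i ∈ g.strategic)
    (hz : z ∉ Set.range v) : g.IsAssignment (Function.update v i z) := by
  refine ⟨injective_update_of_notMem_range hv.1 hz, fun j hj ↦ ?_⟩
  rw [update_of_ne (ne_of_mem_of_not_mem hi hj).symm, hv.2 j hj]

theorem IsAssignment.isEquilibrium_of_center_mem_range (hv : g.IsAssignment v)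
    (hg : g.top = starGraph c) (hc : c ∈ Set.range v) : g.IsEquilibrium v := by
  refine ⟨hv, fun i _ z hz ↦ ?_⟩
  have hzc : z ≠ c := by
    rintro rfl
    exact hc.elim hz
  have hz_nbr : g.top.neighborSet z = {c} := hg ▸ neighborSet_starGraph_of_ne hzc
  obtain rfl | hi := eq_or_ne (v i) c
  · rw [util_update_eq_zero_of_neighborSet_eq_singleton hv.1 hz_nbr]
    exact g.util_nonneg v i
  · have hi_nbr : g.top.neighborSet (v i) = {c} := hg ▸ neighborSet_starGraph_of_ne hi
    exact (util_update_of_neighborSet_eq (hz_nbr.trans hi_nbr.symm)).le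

theorem IsAssignment.exists_isEquilibrium (hv : g.IsAssignment v) (hg : g.top = starGraph c) :
    ∃ w, g.IsEquilibrium w := by
  by_cases hc : c ∈ Set.range v
  · exact ⟨v, hv.isEquilibrium_of_center_mem_range hg hc⟩
  obtain hR | ⟨i, hi⟩ := g.strategic.eq_empty_or_nonempty
  · exact ⟨v, hv, by simp [hR]⟩
  · exact ⟨_, (hv.update hi hc).isEquilibrium_of_center_mem_range hg ⟨i, update_self ..⟩⟩

end Update

theorem WellFormed.exists_isAssignment [Fintype A] [DecidableEq A] [Fintype V]
    (hg : g.WellFormed) : ∃ v, g.IsAssignment v := by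
  obtain ⟨-, hcard, hloc⟩ := hg
  obtain ⟨v, hv, hvloc⟩ := exists_injective_eqOn_of_card_le hcard.le hloc
  exact ⟨v, hv, fun i hi ↦ hvloc (Finset.mem_coe.2 (Finset.mem_compl.2 hi))⟩

end SchellingGame

theorem stmt0_general {A V : Type} [DecidableEq A] {g : SchellingGame A V}
    (hg : ∃ v, g.IsAssignment v) {c : V}
    (hstar : ∀ a b : V, g.top.Adj a b ↔ (a ≠ b ∧ (a = c ∨ b = c))) :
    (∀ v : A → V, g.IsAssignment v → (∃ i : A, v i = c) → g.IsEquilibrium v) ∧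
      (∃ v : A → V, g.IsEquilibrium v) := by
  have htop : g.top = starGraph c := by
    ext a b
    rw [hstar, starGraph_adj]
  obtain ⟨v₀, hv₀⟩ := hg
  exact ⟨fun _ hv hc ↦ hv.isEquilibrium_of_center_mem_range htop hc,
    hv₀.exists_isEquilibrium htop⟩

/-- Every social Schelling game whose topology is a star graph admits at
least one equilibrium assignment; in fact, every assignment in which the center of the
star is occupied by some agent is an equilibrium. -/
theorem stmt0 (A V : Type) [Fintype A] [DecidableEq A] [Fintype V] [DecidableEq V]
    (g : SchellingGame A V) (hwf : g.WellFormed) (c : V)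
    (hstar : ∀ a b : V, g.top.Adj a b ↔ (a ≠ b ∧ (a = c ∨ b = c))) :
    (∀ v : A → V, g.IsAssignment v → (∃ i : A, v i = c) → g.IsEquilibrium v) ∧
      (∃ v : A → V, g.IsEquilibrium v) :=
  stmt0_general hwf.exists_isAssignment hstar
end

section
/- In a social Schelling game whose topology G = (V,E) has maximum degree 2, define for each assignment v and each edge e = {a,b} ∈ E the quantity φ(v,e) equal to 1 if a and b are occupied by two agents who are friends, equal to 0 if a and b are occupied by two agents who are enemies, and equal to 1/3 if at least one of a, b is unoccupied; let Φ(v) = Σ_{e∈E} φ(v,e). Then Φ is an ordinal potential function: whenever a strategic agent strictly increases her utility by relocating from her node to an unoccupied node, producing assignment v' from assignment v, it holds that Φ(v') > Φ(v). -/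
namespace SchellingGame

variable {A V : Type} [Fintype A] [DecidableEq A] [Fintype V] [DecidableEq V]

open Classical in
/-- The potential of a pair of nodes `a, b` (intended for edges `{a,b}` of the
topology): `1` if `a` and `b` are occupied by two agents who are friends, `0` if
they are occupied by two agents who are enemies, and `1/3` if at least one of
`a`, `b` is unoccupied. -/
noncomputable def phiPair (g : SchellingGame A V) (v : A → V) (a b : V) : ℚ :=
  if (¬ (∃ i : A, v i = a)) ∨ (¬ (∃ j : A, v j = b)) then 1/3
  else if ∃ i j : A, v i = a ∧ v j = b ∧ g.net.Adj i j then 1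
  else 0

theorem phiPair_symm (g : SchellingGame A V) (v : A → V) (a b : V) :
    g.phiPair v a b = g.phiPair v b a := by
  classical
  unfold phiPair
  have h1 : ((¬ (∃ i : A, v i = a)) ∨ (¬ (∃ j : A, v j = b))) ↔
      ((¬ (∃ i : A, v i = b)) ∨ (¬ (∃ j : A, v j = a))) := or_comm
  have h2 : (∃ i j : A, v i = a ∧ v j = b ∧ g.net.Adj i j) ↔
      (∃ i j : A, v i = b ∧ v j = a ∧ g.net.Adj i j) := by
    constructor <;> rintro ⟨i, j, hi, hj, hf⟩ <;> exact ⟨j, i, hj, hi, hf.symm⟩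
  simp only [h1, h2]

/-- The potential `Φ(v) = Σ_{e ∈ E} φ(v, e)` of an assignment `v`. -/
noncomputable def Phi (g : SchellingGame A V) [DecidableRel g.top.Adj] (v : A → V) : ℚ :=
  ∑ e ∈ g.top.edgeFinset, Sym2.lift ⟨g.phiPair v, g.phiPair_symm v⟩ e

end SchellingGame

/-! The occupied edges of the topology form, after pulling back along the placement, two disjoint
graphs on the agents: the adjacent friends and the adjacent enemies. Counting edges gives
`3 Φ = |E| + 2 |E_friend| - |E_enemy|`. A relocation of `i` only affects the edges at `i`, so it
changes `3 Φ` by the change of `2 f_i - e_i`; and as long as `f_i + e_i ≤ 2`, a larger ratio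
`f_i / (f_i + e_i)` forces a larger value of `2 f_i - e_i`. -/

section EdgeCounting

variable {α β : Type*} [Fintype α]

open Classical in
theorem sum_ite_mem_edgeSet_map [Fintype β] {K : SimpleGraph α} {G : SimpleGraph β}
    [DecidableRel K.Adj] [DecidableRel G.Adj] (f : α ↪ β) (hK : K ≤ G.comap f) :
    (∑ e ∈ G.edgeFinset, if e ∈ (K.map f).edgeSet then 1 else 0) = K.edgeFinset.card := by
  have hsub : K.map f ≤ G := (SimpleGraph.map_le_iff_le_comap f K G).mpr hK
  rw [← SimpleGraph.card_edgeFinset_map f K, ← Finset.card_filter]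
  congr 1
  ext e
  simpa only [Finset.mem_filter, SimpleGraph.mem_edgeFinset, and_iff_right_iff_imp] using
    fun he => SimpleGraph.edgeSet_mono hsub he

theorem card_edgeFinset_add_degree_eq_of_deleteIncidenceSet_eq {K L : SimpleGraph α}
    [DecidableRel K.Adj] [DecidableRel L.Adj] {x : α}
    (h : K.deleteIncidenceSet x = L.deleteIncidenceSet x) :
    K.edgeFinset.card + L.degree x = L.edgeFinset.card + K.degree x := by
  classical
  have hcard : K.edgeFinset.card - K.degree x = L.edgeFinset.card - L.degree x := by
    rw [← SimpleGraph.card_edgeFinset_deleteIncidenceSet,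
      ← SimpleGraph.card_edgeFinset_deleteIncidenceSet]
    congr!
  have hK := K.degree_le_card_edgeFinset x
  have hL := L.degree_le_card_edgeFinset x
  omega

end EdgeCounting

theorem two_mul_sub_lt_of_div_add_lt {f e f' e' : ℕ} (h : f + e ≤ 2) (h' : f' + e' ≤ 2)
    (hlt : (f : ℚ) / (f + e) < f' / (f' + e')) : 2 * (f : ℤ) - e < 2 * f' - e' := by
  have hf' : 0 < f' := by
    by_contra! hf'
    obtain rfl : f' = 0 := by omega
    rw [Nat.cast_zero, zero_div] at hlt
    exact hlt.not_ge (by positivity)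
  rcases Nat.eq_zero_or_pos f with rfl | hf
  · omega
  have hcross : f * e' < f' * e := by
    rw [div_lt_div_iff₀ (by positivity) (by positivity)] at hlt
    norm_cast at hlt
    linarith
  have he : 0 < e := Nat.pos_of_mul_pos_left (Nat.zero_lt_of_lt hcross)
  obtain ⟨rfl, rfl⟩ : f = 1 ∧ e = 1 := by omega
  omega

theorem injective_update_of_forall_ne {α β : Type*} [DecidableEq α] {v : α → β}
    (hv : Function.Injective v) (i : α) {z : β} (hz : ∀ j, v j ≠ z) :
    Function.Injective (Function.update v i z) := by
  intro j k hjk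
  grind [Function.Injective]

namespace SchellingGame

variable {A V : Type}

/-- The friendships realized under the placement `v`: two agents are joined if they are friends
occupying adjacent nodes. -/
def friendGraph (g : SchellingGame A V) (v : A → V) : SimpleGraph A :=
  g.top.comap v ⊓ g.net

/-- The enmities realized under the placement `v`: two agents are joined if they are enemies
occupying adjacent nodes. -/
def enemyGraph (g : SchellingGame A V) (v : A → V) : SimpleGraph A :=
  g.top.comap v \ g.net

variable (g : SchellingGame A V) {v : A → V}

theorem friendGraph_adj {j k : A} :
    (g.friendGraph v).Adj j k ↔ g.top.Adj (v j) (v k) ∧ g.net.Adj j k :=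
  Iff.rfl

theorem enemyGraph_adj {j k : A} :
    (g.enemyGraph v).Adj j k ↔ g.top.Adj (v j) (v k) ∧ ¬ g.net.Adj j k :=
  Iff.rfl

theorem deleteIncidenceSet_friendGraph_update [DecidableEq A] (v : A → V) (i : A) (z : V) :
    (g.friendGraph (Function.update v i z)).deleteIncidenceSet i =
      (g.friendGraph v).deleteIncidenceSet i := by
  ext j k
  simp +contextual only [SimpleGraph.deleteIncidenceSet_adj, friendGraph_adj, ne_eq,
    and_congr_left_iff, not_false_eq_true, Function.update_of_ne, implies_true]

theorem deleteIncidenceSet_enemyGraph_update [DecidableEq A] (v : A → V) (i : A) (z : V) :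
    (g.enemyGraph (Function.update v i z)).deleteIncidenceSet i =
      (g.enemyGraph v).deleteIncidenceSet i := by
  ext j k
  simp +contextual only [SimpleGraph.deleteIncidenceSet_adj, enemyGraph_adj, ne_eq,
    and_congr_left_iff, not_false_eq_true, Function.update_of_ne, implies_true]

theorem degree_friendGraph (v : A → V) (i : A) [Fintype ((g.friendGraph v).neighborSet i)] :
    (g.friendGraph v).degree i = g.fcount v i := by
  rw [← SimpleGraph.card_neighborSet_eq_degree, ← Nat.card_eq_fintype_card, fcount]
  exact Nat.card_congr (Equiv.subtypeEquivRight fun _ => and_comm)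

theorem degree_enemyGraph (v : A → V) (i : A) [Fintype ((g.enemyGraph v).neighborSet i)] :
    (g.enemyGraph v).degree i = g.ecount v i := by
  rw [← SimpleGraph.card_neighborSet_eq_degree, ← Nat.card_eq_fintype_card, ecount]
  refine Nat.card_congr (Equiv.subtypeEquivRight fun j => ?_)
  rw [SimpleGraph.mem_neighborSet, enemyGraph_adj]
  refine ⟨fun h => ⟨fun hji => ?_, h.2, h.1⟩, fun h => ⟨h.2.2, h.2.1⟩⟩
  exact g.top.loopless.irrefl _ (hji ▸ h.1)

theorem fcount_add_ecount_le_card_adj [Finite V] (hv : Function.Injective v) (i : A) :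
    g.fcount v i + g.ecount v i ≤ Nat.card {b : V // g.top.Adj (v i) b} := by
  have : Finite A := Finite.of_injective v hv
  let friends : Set A := {j | g.net.Adj i j ∧ g.top.Adj (v i) (v j)}
  let enemies : Set A := {j | j ≠ i ∧ ¬ g.net.Adj i j ∧ g.top.Adj (v i) (v j)}
  have hdisj : Disjoint friends enemies :=
    Set.disjoint_left.mpr fun _ hf he => he.2.1 hf.1
  calc g.fcount v i + g.ecount v i = (friends ∪ enemies).ncard :=
        (Set.ncard_union_eq hdisj).symm
    _ ≤ {b | g.top.Adj (v i) b}.ncard := by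
        refine Set.ncard_le_ncard_of_injOn v ?_ hv.injOn
        rintro j (hj | hj)
        exacts [hj.2, hj.2.2]

-- The case distinction in `util` is absorbed by the convention `0 / 0 = 0`.
theorem util_eq_div (v : A → V) (i : A) :
    g.util v i = (g.fcount v i : ℚ) / (g.fcount v i + g.ecount v i) := by
  unfold util
  split_ifs with h
  · rw [h, Nat.cast_zero, zero_div]
  · rfl

variable [Fintype A] [DecidableEq V]

theorem phiPair_of_unoccupied {a b : V} (h : a ∉ Set.range v ∨ b ∉ Set.range v) :
    g.phiPair v a b = 1 / 3 :=
  if_pos h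

open Classical in
theorem phiPair_apply_apply (hv : Function.Injective v) (j k : A) :
    g.phiPair v (v j) (v k) = if g.net.Adj j k then 1 else 0 := by
  simp [phiPair, hv.eq_iff]

open Classical in
theorem three_mul_phiPair (f : A ↪ V) {a b : V} (hab : g.top.Adj a b) :
    3 * g.phiPair f a b = 1 + 2 * (if ((g.friendGraph f).map f).Adj a b then 1 else 0) -
      if ((g.enemyGraph f).map f).Adj a b then 1 else 0 := by
  by_cases h : a ∈ Set.range f ∧ b ∈ Set.range f
  · obtain ⟨⟨j, rfl⟩, ⟨k, rfl⟩⟩ := h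
    rw [g.phiPair_apply_apply f.injective]
    simp only [SimpleGraph.map_adj_apply, friendGraph_adj, enemyGraph_adj, hab, true_and]
    split_ifs <;> norm_num
  · have hnone : ∀ K : SimpleGraph A, ¬ (K.map f).Adj a b := by
      intro K hK
      obtain ⟨j, k, -, hj, hk⟩ := (SimpleGraph.map_adj f K a b).mp hK
      exact h ⟨⟨j, hj⟩, ⟨k, hk⟩⟩
    rw [g.phiPair_of_unoccupied (not_and_or.mp h), if_neg (hnone _), if_neg (hnone _)]
    norm_num

variable [DecidableEq A] [Fintype V] [DecidableRel g.top.Adj]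

open Classical in
theorem three_mul_Phi (hv : Function.Injective v) :
    3 * g.Phi v = g.top.edgeFinset.card + 2 * (g.friendGraph v).edgeFinset.card -
      (g.enemyGraph v).edgeFinset.card := by
  let f : A ↪ V := ⟨v, hv⟩
  have hedge : ∀ e ∈ g.top.edgeFinset, 3 * Sym2.lift ⟨g.phiPair v, g.phiPair_symm v⟩ e =
      1 + 2 * (if e ∈ ((g.friendGraph v).map f).edgeSet then 1 else 0) -
        if e ∈ ((g.enemyGraph v).map f).edgeSet then 1 else 0 := by
    intro e he
    induction e with | _ a b => exact g.three_mul_phiPair f (SimpleGraph.mem_edgeFinset.mp he)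
  rw [← sum_ite_mem_edgeSet_map (K := g.friendGraph v) f inf_le_left,
    ← sum_ite_mem_edgeSet_map (K := g.enemyGraph v) f sdiff_le, Phi, Finset.mul_sum,
    Finset.sum_congr rfl hedge, Finset.sum_sub_distrib, Finset.sum_add_distrib, ← Finset.mul_sum]
  simp only [Finset.sum_const, nsmul_eq_mul, mul_one, Nat.cast_sum, Nat.cast_ite, Nat.cast_one,
    Nat.cast_zero]

theorem three_mul_Phi_update_sub (hv : Function.Injective v) (i : A) {z : V}
    (hz : ∀ j, v j ≠ z) :
    3 * (g.Phi (Function.update v i z) - g.Phi v) =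
      (2 * g.fcount (Function.update v i z) i - g.ecount (Function.update v i z) i) -
        (2 * g.fcount v i - g.ecount v i) := by
  classical
  have hfriend := card_edgeFinset_add_degree_eq_of_deleteIncidenceSet_eq
    (g.deleteIncidenceSet_friendGraph_update v i z)
  have henemy := card_edgeFinset_add_degree_eq_of_deleteIncidenceSet_eq
    (g.deleteIncidenceSet_enemyGraph_update v i z)
  simp only [degree_friendGraph, degree_enemyGraph] at hfriend henemy
  rw [mul_sub, g.three_mul_Phi (injective_update_of_forall_ne hv i hz), g.three_mul_Phi hv]
  qify at hfriend henemy
  linarith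

end SchellingGame

theorem stmt2_general {A V : Type} [Fintype A] [DecidableEq A] [Fintype V] [DecidableEq V]
    (g : SchellingGame A V) [DecidableRel g.top.Adj] {v : A → V} (hv : Function.Injective v)
    {i : A} {z : V} (hz : ∀ j, v j ≠ z) (hsrc : g.fcount v i + g.ecount v i ≤ 2)
    (hdst : g.fcount (Function.update v i z) i + g.ecount (Function.update v i z) i ≤ 2)
    (hprofit : g.util v i < g.util (Function.update v i z) i) :
    g.Phi v < g.Phi (Function.update v i z) := by
  rw [g.util_eq_div, g.util_eq_div] at hprofit
  have hgain := two_mul_sub_lt_of_div_add_lt hsrc hdst hprofit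
  have hPhi := g.three_mul_Phi_update_sub hv i hz
  qify at hgain
  linarith

/-- in a social Schelling game whose topology has maximum degree 2, the
function `Φ` is an ordinal potential: any strictly profitable deviation of a strategic
agent to an unoccupied node strictly increases `Φ`. -/
theorem stmt2 (A V : Type) [Fintype A] [DecidableEq A] [Fintype V] [DecidableEq V]
    (g : SchellingGame A V) [DecidableRel g.top.Adj] (hwf : g.WellFormed)
    (hdeg : ∀ a : V, Nat.card {b : V // g.top.Adj a b} ≤ 2)
    (v : A → V) (hv : g.IsAssignment v) (i : A) (hi : i ∈ g.strategic)
    (z : V) (hz : ∀ j : A, v j ≠ z)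
    (hprofit : g.util v i < g.util (Function.update v i z) i) :
    g.Phi v < g.Phi (Function.update v i z) := by
  have hcount {w : A → V} (hw : w.Injective) :=
    (g.fcount_add_ecount_le_card_adj hw i).trans (hdeg _)
  exact stmt2_general g hv.1 hz (hcount hv.1)
    (hcount (injective_update_of_forall_ne hv.1 i hz)) hprofit
end

section
/- For every k ≥ 2 there exists a k-typed Schelling game with no stubborn agents (all agents strategic), with exactly 2k+1 agents of each type, whose topology is a tree, that admits no equilibrium assignment. -/
/-
Hang off a root one pendant leaf and `2k - 1` stars with `k` leaves each. This tree has one node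
more than there are agents, so exactly one node `z` is vacant, and wherever `z` is, some agent wants
to move there.
* `z` is the root: the agent on its pendant leaf has utility `0`, and stability leaves her as the
  only agent of her type.
* `z` is the pendant leaf of the root: an agent who moves there next to a friend on the root gets
  utility `1`, so the type found at the root fills whole stars, and `1 + m (k + 1) = 2k + 1`, which
  is impossible for `k ≥ 2`.
* `z` is the center of a star: the agents on the `k` leaves of that star have utility `0`, so they
  and the agent on the root are of `k + 1` different types.
* `z` is a leaf of a star: if the center of the star has the type of the root, then this type fills
  all the other stars; if not, this type does not leave the star. One is too much for `2k + 1`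
  agents of a type, the other too little.
-/

open Finset

/-- A partial coloring of the nodes of `G`, in which a node colored `none` is vacant and a node
colored `some a` is occupied by an agent of type `a`. It is stable if no occupant with utility `0`
could obtain a positive utility at a vacant node, and no occupant with utility less than `1` could
obtain utility `1` there. These are the consequences of equilibrium that the argument needs. -/
structure IsStableColoring {V T : Type*} (G : SimpleGraph V) (c : V → Option T) : Prop where
  exists_adj : ∀ {x y z a}, c z = none → c x = some a → c y = some a → y ≠ x → G.Adj z y →
    ∃ w, G.Adj x w ∧ c w = some a
  eq_of_adj : ∀ {x y z w a}, c z = none → c x = some a → c y = some a → y ≠ x → G.Adj z y →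
    (∀ u, u ≠ x → G.Adj z u → c u ≠ none → c u = some a) →
    G.Adj x w → c w ≠ none → c w = some a

theorem exists_forall_eq_none_iff {V T : Type*} [Fintype V] [Fintype T] [DecidableEq T]
    {c : V → Option T} (h : Fintype.card V = ∑ a, #{x | c x = some a} + 1) :
    ∃ z, ∀ x, c x = none ↔ x = z := by
  have hsum : Fintype.card V = ∑ o, #{x | c x = o} :=
    card_eq_sum_card_fiberwise fun _ _ => mem_univ _
  obtain ⟨z, hz⟩ : ∃ z, ({x | c x = none} : Finset V) = {z} := by
    rw [← card_eq_one]
    rw [Fintype.sum_option] at hsum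
    lia
  exact ⟨z, fun x => by simpa using Finset.ext_iff.1 hz x⟩

namespace IsStableColoring

variable {V W T : Type*} {G : SimpleGraph V} {c : V → Option T} {x y z w : V} {a : T}

theorem comp_iso {H : SimpleGraph W} (hc : IsStableColoring G c) (φ : H ≃g G) :
    IsStableColoring H (c ∘ φ) where
  exists_adj hz hx hy hyx hzy := by
    obtain ⟨w, hxw, hw⟩ := hc.exists_adj hz hx hy (φ.injective.ne hyx) (φ.map_adj_iff.2 hzy)
    exact ⟨φ.symm w, by simpa using φ.symm.map_adj_iff.2 hxw, by simpa using hw⟩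
  eq_of_adj hz hx hy hyx hzy hall hxw hw := by
    refine hc.eq_of_adj hz hx hy (φ.injective.ne hyx) (φ.map_adj_iff.2 hzy) ?_
      (φ.map_adj_iff.2 hxw) hw
    intro u hux hzu hu
    simpa using hall (φ.symm u) (fun h => hux (by simp [← h]))
      (by simpa using φ.symm.map_adj_iff.2 hzu) (by simpa using hu)

theorem ne_of_forall_adj_eq (hc : IsStableColoring G c) (hz : c z = none) (hx : c x = some a)
    (hxz : ∀ w, G.Adj x w → w = z) (hyx : y ≠ x) (hzy : G.Adj z y) : c y ≠ some a := by
  intro hy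
  obtain ⟨w, hxw, hw⟩ := hc.exists_adj hz hx hy hyx hzy
  simp [hxz w hxw, hz] at hw

theorem eq_of_adj_of_forall_adj_eq (hc : IsStableColoring G c) (hz : c z = none)
    (hzy : G.Adj z y) (hzu : ∀ u, G.Adj z u → u = y) (hy : c y = some a) (hx : c x = some a)
    (hxy : x ≠ y) (hxw : G.Adj x w) (hw : c w ≠ none) : c w = some a :=
  hc.eq_of_adj hz hx hy hxy.symm hzy (fun u _ hu _ => hzu u hu ▸ hy) hxw hw

end IsStableColoring

namespace SchellingGame

variable {A V T : Type}

section Utility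

variable {g : SchellingGame A V} {v : A → V} {i j : A} {z : V}

theorem util_le_one : g.util v i ≤ 1 := by
  rw [util]
  split_ifs
  · exact zero_le_one
  · exact div_le_one_of_le₀ (by simp) (by positivity)

variable [Finite A]

theorem fcount_pos_iff : 0 < g.fcount v i ↔ ∃ j, g.net.Adj i j ∧ g.top.Adj (v i) (v j) := by
  rw [fcount, Finite.card_pos_iff, nonempty_subtype]

theorem ecount_eq_zero_iff :
    g.ecount v i = 0 ↔ ∀ j, g.top.Adj (v i) (v j) → g.net.Adj i j := by
  have ne_of_adj : ∀ j, g.top.Adj (v i) (v j) → j ≠ i := by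
    rintro j h rfl
    exact g.top.irrefl h
  rw [ecount, Finite.card_eq_zero_iff, isEmpty_subtype]
  grind

theorem util_pos_iff : 0 < g.util v i ↔ ∃ j, g.net.Adj i j ∧ g.top.Adj (v i) (v j) := by
  rw [← fcount_pos_iff, util]
  split_ifs with h
  · simp [h]
  · have : 0 < g.fcount v i := Nat.pos_of_ne_zero h
    simp only [this, iff_true]
    positivity

theorem util_eq_one_iff : g.util v i = 1 ↔
    (∃ j, g.net.Adj i j ∧ g.top.Adj (v i) (v j)) ∧
      ∀ j, g.top.Adj (v i) (v j) → g.net.Adj i j := by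
  rw [← fcount_pos_iff, ← ecount_eq_zero_iff, util]
  split_ifs with h
  · simp [h]
  · have hpos : 0 < g.fcount v i := Nat.pos_of_ne_zero h
    rw [div_eq_one_iff_eq (by positivity), left_eq_add, Nat.cast_eq_zero, and_iff_right hpos]

variable [DecidableEq A]

theorem util_update_pos (hij : g.net.Adj i j) (hzj : g.top.Adj z (v j)) :
    0 < g.util (Function.update v i z) i :=
  util_pos_iff.2 ⟨j, hij, by simpa [hij.ne'] using hzj⟩

theorem util_update_eq_one (hij : g.net.Adj i j) (hzj : g.top.Adj z (v j))
    (hall : ∀ l ≠ i, g.top.Adj z (v l) → g.net.Adj i l) :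
    g.util (Function.update v i z) i = 1 := by
  refine util_eq_one_iff.2 ⟨util_pos_iff.1 (util_update_pos hij hzj), fun l hl => ?_⟩
  have hli : l ≠ i := by
    rintro rfl
    exact g.top.irrefl hl
  exact hall l hli (by simpa [hli] using hl)

theorem IsEquilibrium.exists_friend_adj (hv : g.IsEquilibrium v) (hi : i ∈ g.strategic)
    (hz : z ∉ Set.range v) (hij : g.net.Adj i j) (hzj : g.top.Adj z (v j)) :
    ∃ l, g.net.Adj i l ∧ g.top.Adj (v i) (v l) :=
  util_pos_iff.1 <| (util_update_pos hij hzj).trans_le <| hv.2 i hi z fun l hl => hz ⟨l, hl⟩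

theorem IsEquilibrium.friend_of_adj (hv : g.IsEquilibrium v) (hi : i ∈ g.strategic)
    (hz : z ∉ Set.range v) (hij : g.net.Adj i j) (hzj : g.top.Adj z (v j))
    (hall : ∀ l ≠ i, g.top.Adj z (v l) → g.net.Adj i l) {l : A} (hl : g.top.Adj (v i) (v l)) :
    g.net.Adj i l := by
  have hle := hv.2 i hi z fun l hl => hz ⟨l, hl⟩
  rw [util_update_eq_one hij hzj hall] at hle
  exact (util_eq_one_iff.1 (util_le_one.antisymm hle)).2 l hl

end Utility

section Coloring

variable {typ : A → T} {v : A → V}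

/-- The coloring of the nodes induced by an assignment `v`: a node has the type of its occupant, and
`none` if it is vacant. -/
noncomputable def occupantType (typ : A → T) (v : A → V) (x : V) : Option T :=
  (Function.partialInv v x).map typ

theorem occupantType_eq_some_iff (hv : v.Injective) {x : V} {a : T} :
    occupantType typ v x = some a ↔ ∃ i, v i = x ∧ typ i = a := by
  simp only [occupantType, Option.map_eq_some_iff, hv.isPartialInv _ _]

theorem occupantType_apply (hv : v.Injective) (i : A) :
    occupantType typ v (v i) = some (typ i) :=
  (occupantType_eq_some_iff hv).2 ⟨i, rfl, rfl⟩

theorem occupantType_eq_none_iff (hv : v.Injective) {x : V} :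
    occupantType typ v x = none ↔ x ∉ Set.range v := by
  simp [Option.eq_none_iff_forall_ne_some, occupantType_eq_some_iff hv]

theorem card_occupantType_eq_some [Fintype V] [DecidableEq T] (hv : v.Injective) (a : T) :
    #{x | occupantType typ v x = some a} = Nat.card {i // typ i = a} := by
  have himage : ({x | occupantType typ v x = some a} : Set V) = v '' {i | typ i = a} := by
    ext x
    simp [occupantType_eq_some_iff hv, and_comm]
  rw [← Set.ncard_coe_finset, coe_filter_univ, himage, Set.ncard_image_of_injective _ hv]
  rfl

theorem IsEquilibrium.isStableColoring_occupantType [Finite A] [DecidableEq A]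
    {g : SchellingGame A V} (hv : g.IsEquilibrium v) (hs : ∀ i, i ∈ g.strategic)
    (hnet : ∀ i j, g.net.Adj i j ↔ i ≠ j ∧ typ i = typ j) :
    IsStableColoring g.top (occupantType typ v) where
  exists_adj {x y z a} hz hx hy hyx hzy := by
    have hinj := hv.1.1
    rw [occupantType_eq_none_iff hinj] at hz
    obtain ⟨i, rfl, rfl⟩ := (occupantType_eq_some_iff hinj).1 hx
    obtain ⟨j, rfl, hji⟩ := (occupantType_eq_some_iff hinj).1 hy
    have hij : g.net.Adj i j := (hnet i j).2 ⟨fun h => hyx (h ▸ rfl), hji.symm⟩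
    obtain ⟨l, hil, hadj⟩ := hv.exists_friend_adj (hs i) hz hij hzy
    exact ⟨v l, hadj, by rw [occupantType_apply hinj, ((hnet i l).1 hil).2]⟩
  eq_of_adj {x y z w a} hz hx hy hyx hzy hall hxw hw := by
    have hinj := hv.1.1
    rw [occupantType_eq_none_iff hinj] at hz
    obtain ⟨i, rfl, rfl⟩ := (occupantType_eq_some_iff hinj).1 hx
    obtain ⟨j, rfl, hji⟩ := (occupantType_eq_some_iff hinj).1 hy
    obtain ⟨b, hb⟩ := Option.ne_none_iff_exists'.1 hw
    obtain ⟨l, rfl, rfl⟩ := (occupantType_eq_some_iff hinj).1 hb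
    have hij : g.net.Adj i j := (hnet i j).2 ⟨fun h => hyx (h ▸ rfl), hji.symm⟩
    have hil : g.net.Adj i l := by
      refine hv.friend_of_adj (hs i) hz hij hzy (fun m hm hzm => ?_) hxw
      have hmi := hall (v m) (hinj.ne hm) hzm (by simp [occupantType_apply hinj])
      rw [occupantType_apply hinj, Option.some_inj] at hmi
      exact (hnet i m).2 ⟨hm.symm, hmi.symm⟩
    rw [hb, ((hnet i l).1 hil).2]

end Coloring

end SchellingGame

theorem isTree_fromRel_of_iterate_eq {V : Type*} [Finite V] {p : V → V} {r : V} (hr : p r = r)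
    (hp : ∀ x, ∃ n, p^[n] x = r) : (SimpleGraph.fromRel (p · = ·)).IsTree := by
  set G := SimpleGraph.fromRel (p · = ·)
  have reachable_parent (x : V) : G.Reachable x (p x) := by
    by_cases h : x = p x
    · rw [← h]
    · exact SimpleGraph.Adj.reachable ((SimpleGraph.fromRel_adj ..).2 ⟨h, .inl rfl⟩)
  have reachable_iterate (x : V) (n : ℕ) : G.Reachable x (p^[n] x) := by
    induction n with
    | zero => rfl
    | succ n ih => exact Function.iterate_succ_apply' p n x ▸ ih.trans (reachable_parent _)
  have connected : G.Connected :=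
    G.connected_iff_exists_forall_reachable.2 ⟨r, fun x => by
      obtain ⟨n, hn⟩ := hp x
      exact (hn ▸ reachable_iterate x n).symm⟩
  have edgeSet_subset : G.edgeSet ⊆ (fun x => s(x, p x)) '' {r}ᶜ := by
    intro e
    induction e with | _ x y
    rw [SimpleGraph.mem_edgeSet, SimpleGraph.fromRel_adj]
    rintro ⟨hxy, rfl | rfl⟩
    · exact ⟨x, fun h => hxy (by rw [h, hr]), rfl⟩
    · exact ⟨y, fun h => hxy (by rw [h, hr]), Sym2.eq_swap⟩
  have card_edgeSet : Nat.card G.edgeSet + 1 ≤ Nat.card V := by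
    calc Nat.card G.edgeSet + 1 ≤ ((fun x => s(x, p x)) '' {r}ᶜ).ncard + 1 :=
          Nat.add_le_add_right (Set.ncard_le_ncard edgeSet_subset) 1
      _ ≤ ({r}ᶜ : Set V).ncard + 1 := Nat.add_le_add_right (Set.ncard_image_le) 1
      _ = Nat.card V := by rw [← Set.ncard_add_ncard_compl {r}, Set.ncard_singleton, add_comm]
  exact SimpleGraph.isTree_iff_connected_and_card.2
    ⟨connected, card_edgeSet.antisymm connected.card_vert_le_card_edgeSet_add_one⟩

/-- The nodes of the tree used for the counterexample: a root, a pendant leaf attached to the root,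
and, for each `i : ι`, a node `center i` attached to the root that carries leaves indexed by `κ`. -/
inductive StarTree (ι κ : Type*)
  | root
  | rootLeaf
  | center (i : ι)
  | leaf (i : ι) (j : κ)
  deriving DecidableEq, Fintype

namespace StarTree

variable {ι κ T : Type*}

/-- The parent of a node, with the convention that the root is its own parent. -/
def parent : StarTree ι κ → StarTree ι κ
  | root => root
  | rootLeaf => root
  | center _ => root
  | leaf i _ => center i

/-- The tree on the nodes `StarTree ι κ`, in which each node is joined to its parent. -/
def graph (ι κ : Type*) : SimpleGraph (StarTree ι κ) :=
  SimpleGraph.fromRel (parent · = ·)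

theorem isTree_graph [Finite ι] [Finite κ] : (graph ι κ).IsTree := by
  have := Fintype.ofFinite ι
  have := Fintype.ofFinite κ
  exact isTree_fromRel_of_iterate_eq (r := root) rfl fun x => ⟨2, by cases x <;> rfl⟩

@[simp]
theorem graph_adj_root {x : StarTree ι κ} :
    (graph ι κ).Adj root x ↔ x = rootLeaf ∨ ∃ i, x = center i := by
  cases x <;> simp [graph, parent]

@[simp]
theorem graph_adj_rootLeaf {x : StarTree ι κ} : (graph ι κ).Adj rootLeaf x ↔ x = root := by
  cases x <;> simp [graph, parent]

@[simp]
theorem graph_adj_center {i : ι} {x : StarTree ι κ} :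
    (graph ι κ).Adj (center i) x ↔ x = root ∨ ∃ j, x = leaf i j := by
  cases x <;> simp [graph, parent, eq_comm]

@[simp]
theorem graph_adj_leaf {i : ι} {j : κ} {x : StarTree ι κ} :
    (graph ι κ).Adj (leaf i j) x ↔ x = center i := by
  cases x <;> simp [graph, parent, eq_comm]

section Star

variable [Fintype κ] [DecidableEq ι] [DecidableEq κ]

/-- The `i`-th star: its center and its leaves. -/
def star (i : ι) : Finset (StarTree ι κ) :=
  insert (center i) (univ.image (leaf i))

theorem card_star (i : ι) : #(star i : Finset (StarTree ι κ)) = Fintype.card κ + 1 := by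
  rw [star, card_insert_of_notMem (by simp),
    card_image_of_injective _ fun _ _ h => (leaf.inj h).2, card_univ]

theorem card_biUnion_star (s : Finset ι) :
    #(s.biUnion star : Finset (StarTree ι κ)) = #s * (Fintype.card κ + 1) := by
  rw [card_biUnion, sum_const_nat fun i _ => card_star i]
  intro i _ i' _ hne
  simp [star, Finset.disjoint_left, hne, hne.symm]

end Star

theorem card_eq [Fintype ι] [Fintype κ] :
    Fintype.card (StarTree ι κ) = Fintype.card ι * (Fintype.card κ + 1) + 2 := by
  classical
  have huniv : (univ : Finset (StarTree ι κ)) =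
      insert root (insert rootLeaf (univ.biUnion star)) := by
    ext x
    cases x <;> simp [star]
  rw [← card_univ, huniv, card_insert_of_notMem (by simp [star]),
    card_insert_of_notMem (by simp [star]), card_biUnion_star, card_univ]

theorem card_eq_mul_add_one {k : ℕ} (hk : 1 ≤ k) :
    Fintype.card (StarTree (Fin (2 * k - 1)) (Fin k)) = k * (2 * k + 1) + 1 := by
  obtain ⟨q, rfl⟩ := Nat.exists_eq_add_of_le' hk
  rw [card_eq, Fintype.card_fin, Fintype.card_fin, show 2 * (q + 1) - 1 = 2 * q + 1 by lia]
  ring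

section StableColoring

variable {c : StarTree ι κ → Option T}

theorem exists_forall_eq_rootLeaf_of_root_vacant (hc : IsStableColoring (graph ι κ) c)
    (hz : ∀ x, c x = none ↔ x = root) : ∃ a, ∀ x, c x = some a → x = rootLeaf := by
  obtain ⟨a, ha⟩ : ∃ a, c rootLeaf = some a := Option.ne_none_iff_exists'.1 (by simp [hz])
  have hcenter (i : ι) : c (center i) ≠ some a :=
    hc.ne_of_forall_adj_eq ((hz _).2 rfl) ha (by simp) (by simp) (by simp)
  refine ⟨a, fun x hx => ?_⟩
  cases x with
  | root => simp [(hz root).2 rfl] at hx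
  | rootLeaf => rfl
  | center i => exact absurd hx (hcenter i)
  | leaf i j =>
    obtain ⟨w, hw, hwa⟩ :=
      hc.exists_adj ((hz _).2 rfl) hx ha (by simp) (graph_adj_root.2 (.inl rfl))
    rw [graph_adj_leaf.1 hw] at hwa
    exact absurd hwa (hcenter i)

theorem card_lt_of_center_vacant [Fintype κ] [Fintype T] (hc : IsStableColoring (graph ι κ) c)
    {i : ι} (hz : ∀ x, c x = none ↔ x = center i) : Fintype.card κ < Fintype.card T := by
  have hleaf (j : κ) {y : StarTree ι κ} (hy : y ≠ leaf i j) (hadj : (graph ι κ).Adj (center i) y) :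
      c y ≠ c (leaf i j) := by
    obtain ⟨a, ha⟩ := Option.ne_none_iff_exists'.1 (mt (hz (leaf i j)).1 (by simp))
    rw [ha]
    exact hc.ne_of_forall_adj_eq ((hz _).2 rfl) ha (by simp) hy hadj
  let f : Option κ → Option T := fun o => c (o.elim root (leaf i))
  have hf : f.Injective := by
    rintro (_ | j) (_ | j') h
    · rfl
    · exact absurd h (hleaf j' (by simp) (by simp))
    · exact absurd h.symm (hleaf j (by simp) (by simp))
    · by_contra hne
      exact hleaf j' (by simpa using hne) (by simp) h
  have hnone : none ∉ Set.range f := by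
    rintro ⟨_ | j, h⟩ <;> simp [f, hz] at h
  simpa using Fintype.card_lt_of_injective_of_notMem f hf hnone

variable [Fintype ι] [Fintype κ] [DecidableEq T]

theorem exists_card_eq_of_rootLeaf_vacant (hc : IsStableColoring (graph ι κ) c)
    (hz : ∀ x, c x = none ↔ x = rootLeaf) :
    ∃ a m, #{x | c x = some a} = m * (Fintype.card κ + 1) + 1 := by
  classical
  obtain ⟨a, ha⟩ : ∃ a, c root = some a := Option.ne_none_iff_exists'.1 (by simp [hz])
  have hadj {x w : StarTree ι κ} (hx : c x = some a) (hxr : x ≠ root)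
      (hxw : (graph ι κ).Adj x w) (hw : w ≠ rootLeaf) : c w = some a :=
    hc.eq_of_adj_of_forall_adj_eq ((hz _).2 rfl) (graph_adj_rootLeaf.2 rfl)
      (fun _ => graph_adj_rootLeaf.1) ha hx hxr hxw (mt (hz w).1 hw)
  have hstar (i : ι) (j : κ) : c (leaf i j) = some a ↔ c (center i) = some a :=
    ⟨fun h => hadj h (by simp) (by simp) (by simp), fun h => hadj h (by simp) (by simp) (by simp)⟩
  have hclass : ({x | c x = some a} : Finset (StarTree ι κ)) =
      insert root (({i | c (center i) = some a} : Finset ι).biUnion star) := by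
    ext x
    cases x <;> simp [star, ha, hstar, (hz rootLeaf).2 rfl]
  refine ⟨a, #{i | c (center i) = some a}, ?_⟩
  rw [hclass, card_insert_of_notMem (by simp [star]), card_biUnion_star]

theorem exists_card_le_of_leaf_vacant (hc : IsStableColoring (graph ι κ) c) {i : ι} {j : κ}
    (hz : ∀ x, c x = none ↔ x = leaf i j) :
    ∃ a, (Fintype.card ι - 1) * (Fintype.card κ + 1) ≤ #{x | c x = some a} ∨
      #{x | c x = some a} ≤ Fintype.card κ + 1 := by
  classical
  obtain ⟨a, ha⟩ : ∃ a, c (center i) = some a := Option.ne_none_iff_exists'.1 (by simp [hz])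
  have hadj {x w : StarTree ι κ} (hx : c x = some a) (hxi : x ≠ center i)
      (hxw : (graph ι κ).Adj x w) (hw : w ≠ leaf i j) : c w = some a :=
    hc.eq_of_adj_of_forall_adj_eq ((hz _).2 rfl) (graph_adj_leaf.2 rfl)
      (fun _ => graph_adj_leaf.1) ha hx hxi hxw (mt (hz w).1 hw)
  refine ⟨a, ?_⟩
  by_cases hroot : c root = some a
  · left
    have hcenter (i' : ι) : c (center i') = some a := hadj hroot (by simp) (by simp) (by simp)
    have hsub : ({i}ᶜ : Finset ι).biUnion star ⊆
        ({x | c x = some a} : Finset (StarTree ι κ)) := by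
      intro x hx
      cases x with
      | root | rootLeaf => simp [star] at hx
      | center i' => simpa using hcenter i'
      | leaf i' j' =>
        have hi' : i' ≠ i := by simpa [star] using hx
        simpa using hadj (hcenter i') (by simpa using hi') (by simp) (by simp [hi'])
    simpa [card_biUnion_star, card_compl] using card_le_card hsub
  · right
    have hcenter {i' : ι} (h : c (center i') = some a) : i' = i := by
      by_contra hne
      exact hroot (hadj h (by simpa using hne) (by simp) (by simp))
    have hsub : ({x | c x = some a} : Finset (StarTree ι κ)) ⊆ star i := by
      intro x hx
      rw [mem_filter_univ] at hx
      cases x with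
      | root => exact absurd hx hroot
      | rootLeaf => exact absurd (hadj hx (by simp) (by simp) (by simp)) hroot
      | center i' => simp [star, hcenter hx]
      | leaf i' j' => simp [star, hcenter (i' := i') (hadj hx (by simp) (by simp) (by simp))]
    simpa [card_star] using card_le_card hsub

end StableColoring

theorem not_isStableColoring_graph {k : ℕ}
    {c : StarTree (Fin (2 * k - 1)) (Fin k) → Option (Fin k)} (hk : 2 ≤ k)
    (hcard : ∀ a, #{x | c x = some a} = 2 * k + 1) :
    ¬ IsStableColoring (graph (Fin (2 * k - 1)) (Fin k)) c := by
  intro hc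
  obtain ⟨z, hz⟩ : ∃ z, ∀ x, c x = none ↔ x = z := by
    refine exists_forall_eq_none_iff ?_
    simp [hcard, card_eq_mul_add_one (one_le_two.trans hk)]
  cases z with
  | root =>
    obtain ⟨a, ha⟩ := exists_forall_eq_rootLeaf_of_root_vacant hc hz
    have hle : #{x | c x = some a} ≤ 1 :=
      card_le_card (t := {rootLeaf}) (by simpa [subset_iff] using ha)
    rw [hcard] at hle
    lia
  | rootLeaf =>
    obtain ⟨a, m, hm⟩ := exists_card_eq_of_rootLeaf_vacant hc hz
    rw [hcard, Fintype.card_fin] at hm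
    obtain hlt | hge := Nat.lt_or_ge m 2
    · interval_cases m <;> lia
    · nlinarith
  | center i => simpa using card_lt_of_center_vacant hc hz
  | leaf i j =>
    obtain ⟨a, ha⟩ := exists_card_le_of_leaf_vacant hc hz
    rw [hcard, Fintype.card_fin, Fintype.card_fin] at ha
    obtain hle | hle := ha
    · obtain ⟨q, rfl⟩ := Nat.exists_eq_add_of_le' hk
      rw [show 2 * (q + 2) - 1 - 1 = 2 * q + 2 by lia] at hle
      nlinarith
    · lia

theorem not_isEquilibrium {A V : Type} [Finite A] [DecidableEq A] {k : ℕ} (hk : 2 ≤ k)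
    {g : SchellingGame A V} (φ : graph (Fin (2 * k - 1)) (Fin k) ≃g g.top) {typ : A → Fin k}
    (hs : ∀ i, i ∈ g.strategic) (hnet : ∀ i j, g.net.Adj i j ↔ i ≠ j ∧ typ i = typ j)
    (hcard : ∀ a, Nat.card {i // typ i = a} = 2 * k + 1) (v : A → V) : ¬ g.IsEquilibrium v := by
  intro hv
  let : Fintype V := Fintype.ofEquiv _ φ.toEquiv
  refine not_isStableColoring_graph hk (fun a => ?_)
    ((hv.isStableColoring_occupantType hs hnet).comp_iso φ)
  rw [← hcard a, ← SchellingGame.card_occupantType_eq_some hv.1.1]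
  exact card_bijective φ φ.bijective (by simp)

end StarTree

theorem card_divNat_eq (m n : ℕ) (a : Fin m) : Nat.card {i : Fin (m * n) // i.divNat = a} = n := by
  let e : {i : Fin (m * n) // i.divNat = a} ≃ {b // b = a} × Fin n :=
    (finProdFinEquiv.symm.subtypeEquiv (q := fun p => p.1 = a) fun _ => Iff.rfl).trans
      (Equiv.prodSubtypeFstEquivSubtypeProd (p := (· = a)))
  rw [Nat.card_congr e, Nat.card_prod, Nat.card_unique, one_mul, Nat.card_fin]

/-- For every k ≥ 2 there exists a k-typed Schelling game with no stubborn
agents, exactly 2k+1 agents of each type, whose topology is a tree, with no equilibrium. -/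
theorem stmt4 (k : ℕ) (hk : 2 ≤ k) :
    ∃ (g : SchellingGame (Fin (k * (2 * k + 1))) (Fin (k * (2 * k + 1) + 1)))
      (typ : Fin (k * (2 * k + 1)) → Fin k),
      g.WellFormed ∧ g.IsTypedGame k typ ∧ g.strategic = Finset.univ ∧
      (∀ c : Fin k, Nat.card {i // typ i = c} = 2 * k + 1) ∧
      g.top.IsTree ∧ ¬ ∃ v, g.IsEquilibrium v := by
  let e : Fin (k * (2 * k + 1) + 1) ≃ StarTree (Fin (2 * k - 1)) (Fin k) :=
    (Fintype.equivFinOfCardEq (StarTree.card_eq_mul_add_one (by lia))).symm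
  let φ := SimpleGraph.Iso.comap e (StarTree.graph _ _)
  let typ : Fin (k * (2 * k + 1)) → Fin k := Fin.divNat
  let g : SchellingGame (Fin (k * (2 * k + 1))) (Fin (k * (2 * k + 1) + 1)) :=
    { strategic := univ
      net := ((⊤ : SimpleGraph (Fin k)).comap typ)ᶜ
      top := (StarTree.graph _ _).comap e
      loc := fun _ => 0 }
  have hnet : ∀ i j, g.net.Adj i j ↔ i ≠ j ∧ typ i = typ j := by simp [g]
  have hcard : ∀ a, Nat.card {i // typ i = a} = 2 * k + 1 := card_divNat_eq k (2 * k + 1)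
  have htyp : ∀ a, ∃ i, typ i = a := fun a =>
    nonempty_subtype.1 <| Finite.card_pos_iff.1 <| (hcard a).symm ▸ Nat.succ_pos _
  refine ⟨g, typ, ⟨?_, by simp, by simp [g]⟩, ⟨hnet, htyp⟩, rfl, hcard,
    φ.isTree_iff.2 StarTree.isTree_graph, ?_⟩
  · rw [Fintype.card_fin]
    nlinarith
  · rintro ⟨v, hv⟩
    exact StarTree.not_isEquilibrium hk φ.symm (by simp [g]) hnet hcard v hv
end

section
/- In every k-typed Schelling game with no stubborn agents, n agents with exactly n/k agents of each type, and a connected topology with strictly more nodes than agents, every equilibrium assignment has social welfare at least n/k − 1; consequently, since the maximum social welfare is at most n, the price of anarchy of any such game is at most n/(n/k − 1) = k + o(1). -/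
/-!
Since the topology is connected and not fully occupied, some empty node `z` has a nonempty set `D`
of occupied neighbors. In an equilibrium no agent gains by moving to `z`, so the utility of agent
`i` is at least the fraction of her friends in `D`. Summed over the strategic agents and counted
from the side of `D`, these fractions add up to the average, over `j ∈ D`, of the number of
strategic friends of `j`. In a balanced typed game every agent has exactly `n / k - 1` friends.
-/

section Graph

variable {V : Type*} {G : SimpleGraph V}

theorem exists_mem_notMem_adj_of_preconnected (hG : G.Preconnected) {s : Set V}
    (hne : s.Nonempty) (huniv : s ≠ Set.univ) : ∃ a ∈ s, ∃ b ∉ s, G.Adj a b := by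
  obtain ⟨a, ha⟩ := hne
  obtain ⟨b, hb⟩ := (Set.ne_univ_iff_exists_notMem s).mp huniv
  obtain ⟨p⟩ := hG a b
  obtain ⟨d, -, hfst, hsnd⟩ := p.exists_boundary_dart s ha hb
  exact ⟨d.fst, hfst, d.snd, hsnd, d.adj⟩

end Graph

namespace SchellingGame

open Finset

variable {A V : Type} [Fintype A] {g : SchellingGame A V}

section Utility

variable [DecidableRel g.top.Adj]

variable (g) in
/-- The agents placed by `v` on nodes adjacent to the node `z`, which may itself be occupied or
not. An agent's utility at `z` depends on the placement only through this set. -/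
def neighboringAgents (v : A → V) (z : V) : Finset A := {j | g.top.Adj z (v j)}

@[simp]
theorem mem_neighboringAgents {v : A → V} {z : V} {j : A} :
    j ∈ g.neighboringAgents v z ↔ g.top.Adj z (v j) := by
  simp [neighboringAgents]

theorem neighboringAgents_update [DecidableEq A] (v : A → V) (i : A) (z : V) :
    g.neighboringAgents (Function.update v i z) z = (g.neighboringAgents v z).erase i := by
  ext j
  obtain rfl | hji := eq_or_ne j i <;> simp [*]

variable [DecidableRel g.net.Adj]

theorem fcount_eq_card_filter (v : A → V) (i : A) :
    g.fcount v i = #{j ∈ g.neighboringAgents v (v i) | g.net.Adj i j} :=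
  Nat.subtype_card _ fun j => by simp [and_comm]

theorem ecount_eq_card_filter (v : A → V) (i : A) :
    g.ecount v i = #{j ∈ g.neighboringAgents v (v i) | ¬ g.net.Adj i j} :=
  Nat.subtype_card _ fun j => by
    have hne (h : g.top.Adj (v i) (v j)) : j ≠ i := by
      rintro rfl
      exact h.ne rfl
    simp only [mem_filter, mem_neighboringAgents]
    tauto

-- With no neighboring agent at all the right-hand side is `0 / 0 = 0`, as `util` prescribes.
theorem util_eq_card_div_card (v : A → V) (i : A) :
    g.util v i = #{j ∈ g.neighboringAgents v (v i) | g.net.Adj i j} /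
      #(g.neighboringAgents v (v i)) := by
  have hcard : g.fcount v i + g.ecount v i = #(g.neighboringAgents v (v i)) := by
    rw [fcount_eq_card_filter, ecount_eq_card_filter, card_filter_add_card_filter_not]
  rw [← fcount_eq_card_filter, ← hcard, util]
  split_ifs with h <;> simp [h]

theorem card_div_card_le_util_update [DecidableEq A] (v : A → V) (i : A) (z : V) :
    (#{j ∈ g.neighboringAgents v z | g.net.Adj i j} : ℚ) / #(g.neighboringAgents v z) ≤
      g.util (Function.update v i z) i := by
  have hfriends : {j ∈ (g.neighboringAgents v z).erase i | g.net.Adj i j} =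
      {j ∈ g.neighboringAgents v z | g.net.Adj i j} := by
    rw [filter_erase, erase_eq_of_notMem (by simp)]
  rw [util_eq_card_div_card, Function.update_self, neighboringAgents_update, hfriends]
  obtain hzero | hpos := (#{j ∈ g.neighboringAgents v z | g.net.Adj i j}).eq_zero_or_pos
  · simp [hzero]
  · have herase : 0 < #((g.neighboringAgents v z).erase i) :=
      hpos.trans_le (hfriends ▸ card_filter_le _ _)
    gcongr
    exact erase_subset _ _

end Utility

section Welfare

variable [DecidableEq A] [DecidableRel g.top.Adj] [DecidableRel g.net.Adj] {v : A → V} {z : V}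

theorem IsEquilibrium.card_div_card_le_util (hv : g.IsEquilibrium v) (hz : z ∉ Set.range v)
    {i : A} (hi : i ∈ g.strategic) :
    (#{j ∈ g.neighboringAgents v z | g.net.Adj i j} : ℚ) / #(g.neighboringAgents v z) ≤
      g.util v i :=
  (card_div_card_le_util_update v i z).trans <| hv.2 i hi z fun j hj => hz ⟨j, hj⟩

theorem IsEquilibrium.sum_card_div_card_le_SW (hv : g.IsEquilibrium v) (hz : z ∉ Set.range v) :
    (∑ j ∈ g.neighboringAgents v z, #{i ∈ g.strategic | g.net.Adj i j} : ℚ) /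
      #(g.neighboringAgents v z) ≤ g.SW v := by
  set D := g.neighboringAgents v z
  calc (∑ j ∈ D, #{i ∈ g.strategic | g.net.Adj i j} : ℚ) / #D
      = (∑ i ∈ g.strategic, #{j ∈ D | g.net.Adj i j} : ℚ) / #D := by
        congr 1
        exact_mod_cast (sum_card_bipartiteAbove_eq_sum_card_bipartiteBelow g.net.Adj).symm
    _ = ∑ i ∈ g.strategic, (#{j ∈ D | g.net.Adj i j} : ℚ) / #D := sum_div ..
    _ ≤ g.SW v := sum_le_sum fun _ hi => hv.card_div_card_le_util hz hi

end Welfare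

section Typed

variable [DecidableRel g.net.Adj] {k : ℕ} {typ : A → Fin k}

theorem IsTypedGame.card_friends_add_one (ht : g.IsTypedGame k typ) (j : A) :
    #{i | g.net.Adj i j} + 1 = Nat.card {i // typ i = typ j} := by
  classical
  have hfriends : ({i | g.net.Adj i j} : Finset A) = ({i | typ i = typ j} : Finset A).erase j := by
    ext i
    simp [ht.1]
  rw [hfriends, card_erase_add_one (by simp), Nat.card_eq_fintype_card, Fintype.card_subtype]

theorem IsTypedGame.card_friends_eq (ht : g.IsTypedGame k typ)
    (hbal : ∀ c : Fin k, k * Nat.card {i // typ i = c} = Fintype.card A) (j : A) :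
    (#{i | g.net.Adj i j} : ℚ) = (Fintype.card A : ℚ) / k - 1 := by
  have hk : (k : ℚ) ≠ 0 := by exact_mod_cast (typ j).pos.ne'
  rw [← hbal (typ j), ← ht.card_friends_add_one]
  push_cast
  field_simp
  ring

end Typed

end SchellingGame

open Finset in
theorem stmt12_general {A V : Type} [Finite A] [Nonempty A] [DecidableEq A]
    (g : SchellingGame A V) [DecidableRel g.net.Adj] (hconn : g.top.Preconnected) {δ : ℚ}
    (hδ : ∀ j, δ ≤ #{i ∈ g.strategic | g.net.Adj i j}) {v : A → V} (hv : g.IsEquilibrium v)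
    (hsurj : ¬ Function.Surjective v) : δ ≤ g.SW v := by
  classical
  have := Fintype.ofFinite A
  obtain ⟨_, ⟨j, rfl⟩, z, hz, hadj⟩ :=
    exists_mem_notMem_adj_of_preconnected hconn (Set.range_nonempty v)
      (mt Set.range_eq_univ.mp hsurj)
  have hD : (g.neighboringAgents v z).Nonempty := ⟨j, by simpa using hadj.symm⟩
  have hpos : (0 : ℚ) < #(g.neighboringAgents v z) := by exact_mod_cast hD.card_pos
  refine le_trans ?_ (hv.sum_card_div_card_le_SW hz)
  rw [le_div_iff₀' hpos, ← nsmul_eq_mul]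
  exact card_nsmul_le_sum _ _ _ fun j _ => hδ j

/-- in every k-typed Schelling game with no stubborn agents, exactly n/k
agents of each type, and a connected topology with strictly more nodes than agents,
every equilibrium has social welfare at least n/k - 1 (so the price of anarchy is at
most n/(n/k - 1) = k + o(1)). -/
theorem stmt12 (A V : Type) [Fintype A] [DecidableEq A] [Fintype V] [DecidableEq V]
    (g : SchellingGame A V) (hwf : g.WellFormed)
    (k : ℕ) (hk : 2 ≤ k) (typ : A → Fin k) (ht : g.IsTypedGame k typ)
    (hstrat : g.strategic = Finset.univ)
    (hbal : ∀ c : Fin k, k * Nat.card {i // typ i = c} = Fintype.card A)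
    (hconn : g.top.Connected) :
    ∀ v, g.IsEquilibrium v → (Fintype.card A : ℚ) / k - 1 ≤ g.SW v := by
  classical
  intro v hv
  have : Nonempty A := Fintype.card_pos_iff.mp (two_pos.trans_le hwf.1)
  refine stmt12_general g hconn.preconnected (fun j => ?_) hv
    (mt (Fintype.card_le_of_surjective v) hwf.2.1.not_ge)
  rw [hstrat, ht.card_friends_eq hbal]
end
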